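/- arXiv:2305.07712 — 3 statements merged into one kernel-verified Lean document; each statement's English description precedes it below -/
import Mathlib

section
/- Fix σ > 0 and b ∈ ℝ. The function a ↦ s(a, b) = Σ_{n=0}^∞ (aⁿ / n!) · exp(−(b − n)² / (2σ²)) is differentiable on (0, ∞), and its derivative satisfies ∂s/∂a (a, b) = s(a, b − 1) for every a > 0. -/
open Real Set

/-- The Poisson–Gaussian likelihood series
`s(a, b) = Σ_{n=0}^∞ (aⁿ / n!) · exp(−(b − n)² / (2σ²))`. -/
noncomputable def pgS (σ a b : ℝ) : ℝ :=
  ∑' n : ℕ, a ^ n / (Nat.factorial n) * Real.exp (-(b - n) ^ 2 / (2 * σ ^ 2))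

/-!
As a function of `a`, the series is the exponential generating function of the weights
`w b n = exp (-(b - n)² / (2σ²))`. Differentiating such a generating function shifts its
coefficients by one, and for these weights the shift amounts to replacing `b` by `b - 1`, since
`b - (n + 1) = (b - 1) - n`. The weights are at most `1`, so the series is entire.
-/

open scoped Nat

section PowerSeries

variable {𝕜 E : Type*} [RCLike 𝕜] [NormedAddCommGroup E] [NormedSpace 𝕜 E]
  {c : ℕ → E} {z : 𝕜} {r R : ℝ}

theorem norm_natCast_mul_pow_smul_le (hz : ‖z‖ ≤ r) (hrR : r < R) (n : ℕ) (x : E) :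
    ‖((n : 𝕜) * z ^ (n - 1)) • x‖ ≤ (R - r)⁻¹ * (R ^ n * ‖x‖) := by
  have hr : 0 ≤ r := (norm_nonneg z).trans hz
  have hgap : 0 < R - r := sub_pos.2 hrR
  have bernoulli : n * r ^ (n - 1) * (R - r) ≤ R ^ n := by
    have h := pow_add_mul_le_add_pow hr (by positivity : 0 ≤ 2 * r + (R - r)) n
    rw [add_sub_cancel] at h
    exact (le_add_of_nonneg_left (by positivity)).trans h
  calc ‖((n : 𝕜) * z ^ (n - 1)) • x‖ = n * ‖z‖ ^ (n - 1) * ‖x‖ := by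
        rw [norm_smul, norm_mul, norm_pow, RCLike.norm_natCast]
    _ ≤ n * r ^ (n - 1) * ‖x‖ := by gcongr
    _ ≤ (R - r)⁻¹ * R ^ n * ‖x‖ := by
        grw [(le_inv_mul_iff₀' hgap).2 bernoulli]
    _ = (R - r)⁻¹ * (R ^ n * ‖x‖) := mul_assoc _ _ _

theorem hasDerivAt_tsum_pow_smul [CompleteSpace E] (hc : Summable fun n ↦ R ^ n * ‖c n‖)
    (hz : ‖z‖ < R) :
    HasDerivAt (fun y : 𝕜 ↦ ∑' n, y ^ n • c n) (∑' n : ℕ, ((n : 𝕜) * z ^ (n - 1)) • c n) z := by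
  obtain ⟨r, hzr, hrR⟩ := exists_between hz
  have hsummable : Summable fun n ↦ z ^ n • c n := by
    refine hc.of_norm_bounded fun n ↦ ?_
    rw [norm_smul, norm_pow]
    gcongr
  have hmem : z ∈ Metric.ball 0 r := mem_ball_zero_iff.2 hzr
  exact hasDerivAt_tsum_of_isPreconnected (g' := fun (n : ℕ) y ↦ ((n : 𝕜) * y ^ (n - 1)) • c n)
    (hc.mul_left (R - r)⁻¹) Metric.isOpen_ball Metric.isPreconnected_ball
    (fun n y _ ↦ (hasDerivAt_pow n y).smul_const (c n))
    (fun n y hy ↦ norm_natCast_mul_pow_smul_le (mem_ball_zero_iff.1 hy).le hrR n (c n))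
    hmem hsummable hmem

end PowerSeries

section ExpGenFun

variable {𝕜 E : Type*} [RCLike 𝕜] [NormedAddCommGroup E] [NormedSpace 𝕜 E]
  {w : ℕ → E} {z : 𝕜} {R C : ℝ}

/-- The exponential generating function `z ↦ ∑ zⁿ / n! • w n` of a sequence `w`, as an actual
function rather than a formal power series; its value is `0` where the series diverges. -/
noncomputable def expGenFun (w : ℕ → E) (z : 𝕜) : E :=
  ∑' n : ℕ, (z ^ n / n ! : 𝕜) • w n

theorem expGenFun_succ_eq_tsum (w : ℕ → E) (z : 𝕜) :
    expGenFun (fun n ↦ w (n + 1)) z =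
      ∑' n : ℕ, ((n : 𝕜) * z ^ (n - 1)) • (n ! : 𝕜)⁻¹ • w n := by
  have hsupport : Function.support (fun n : ℕ ↦ ((n : 𝕜) * z ^ (n - 1)) • (n ! : 𝕜)⁻¹ • w n) ⊆
      range Nat.succ := by
    rintro (_ | n) hn
    · simp at hn
    · exact mem_range_self n
  rw [← Nat.succ_injective.tsum_eq hsupport]
  refine tsum_congr fun n ↦ ?_
  have hn : (n + 1 : 𝕜) ≠ 0 := n.cast_add_one_ne_zero
  rw [smul_smul, Nat.succ_eq_add_one, Nat.factorial_succ, Nat.add_sub_cancel]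
  congr 1
  push_cast
  field_simp

theorem hasDerivAt_expGenFun [CompleteSpace E] (hw : Summable fun n ↦ R ^ n / n ! * ‖w n‖)
    (hz : ‖z‖ < R) :
    HasDerivAt (expGenFun w) (expGenFun (fun n ↦ w (n + 1)) z) z := by
  have hcoeff : Summable fun n ↦ R ^ n * ‖(n ! : 𝕜)⁻¹ • w n‖ := by
    simpa only [norm_smul, norm_inv, RCLike.norm_natCast, div_eq_mul_inv, mul_assoc] using hw
  have hseries : expGenFun w = fun y : 𝕜 ↦ ∑' n, y ^ n • (n ! : 𝕜)⁻¹ • w n := by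
    funext y
    simp only [expGenFun, div_eq_mul_inv, mul_smul]
  rw [expGenFun_succ_eq_tsum, hseries]
  exact hasDerivAt_tsum_pow_smul hcoeff hz

theorem hasDerivAt_expGenFun_of_norm_le [CompleteSpace E] (hw : ∀ n, ‖w n‖ ≤ C) (z : 𝕜) :
    HasDerivAt (expGenFun w) (expGenFun (fun n ↦ w (n + 1)) z) z := by
  refine hasDerivAt_expGenFun (R := ‖z‖ + 1) ?_ (lt_add_one _)
  refine .of_nonneg_of_le (fun n ↦ by positivity) (fun n ↦ ?_)
    ((Real.summable_pow_div_factorial (‖z‖ + 1)).mul_right C)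
  gcongr
  exact hw n

end ExpGenFun

section PoissonGaussian

/-- The unnormalized Gaussian weight `exp (-(b - n)² / (2σ²))` of the count `n` in `pgS`. -/
noncomputable def pgWeight (σ b : ℝ) (n : ℕ) : ℝ :=
  Real.exp (-(b - n) ^ 2 / (2 * σ ^ 2))

theorem norm_pgWeight_le_one (σ b : ℝ) (n : ℕ) : ‖pgWeight σ b n‖ ≤ 1 := by
  rw [pgWeight, Real.norm_of_nonneg (Real.exp_nonneg _), Real.exp_le_one_iff, neg_div]
  exact neg_nonpos.2 (by positivity)

theorem pgWeight_add_one (σ b : ℝ) (n : ℕ) : pgWeight σ b (n + 1) = pgWeight σ (b - 1) n := by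
  rw [pgWeight, pgWeight, Nat.cast_add_one, sub_sub, add_comm (n : ℝ)]

theorem pgS_eq_expGenFun (σ a b : ℝ) : pgS σ a b = expGenFun (pgWeight σ b) a := rfl

theorem pgS_hasDerivAt_general (σ : ℝ) (_hσ : σ ≠ 0) (a b : ℝ) :
    HasDerivAt (fun a => pgS σ a b) (pgS σ a (b - 1)) a := by
  simpa only [pgS_eq_expGenFun, pgWeight_add_one] using
    hasDerivAt_expGenFun_of_norm_le (norm_pgWeight_le_one σ b) a

end PoissonGaussian

theorem pgS_hasDerivAt (σ : ℝ) (hσ : 0 < σ) (b : ℝ) :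
    DifferentiableOn ℝ (fun a => pgS σ a b) (Set.Ioi (0 : ℝ)) ∧
    ∀ a : ℝ, 0 < a → HasDerivAt (fun a => pgS σ a b) (pgS σ a (b - 1)) a := by
  have hderiv (a : ℝ) := pgS_hasDerivAt_general σ hσ.ne' a b
  exact ⟨fun a _ ↦ (hderiv a).differentiableAt.differentiableWithinAt, fun a _ ↦ hderiv a⟩
end

section
/- Fix σ > 0 and a ≥ 0. For every b ∈ ℝ, the inequality s(a, b − 1)² ≤ e^{1/σ²} · s(a, b − 2) · s(a, b) holds. -/
open Real

/-!
The `n`-th terms of the three series satisfy the inequality with equality, because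
`(y - t)² + (y + t)² = 2y² + 2t²`; the Cauchy–Schwarz inequality passes this on to the sums.
-/

section CauchySchwarz

variable {ι R : Type*} [CommSemiring R] [LinearOrder R] [IsStrictOrderedRing R] [ExistsAddOfLE R]
  [TopologicalSpace R] [OrderClosedTopology R] [ContinuousMul R]

theorem hasSum_sq_le_mul_of_sq_le_mul {r f g : ι → R} {A B C : R} (hr : HasSum r A)
    (hf : HasSum f B) (hg : HasSum g C) (hf_nonneg : ∀ i, 0 ≤ f i) (hg_nonneg : ∀ i, 0 ≤ g i)
    (hrfg : ∀ i, r i ^ 2 ≤ f i * g i) : A ^ 2 ≤ B * C :=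
  le_of_tendsto_of_tendsto' (Filter.Tendsto.pow hr 2) (Filter.Tendsto.mul hf hg) fun s ↦
    s.sum_sq_le_sum_mul_sum_of_sq_le_mul (fun i _ ↦ hf_nonneg i) (fun i _ ↦ hg_nonneg i)
      fun i _ ↦ hrfg i

end CauchySchwarz

theorem sq_exp_neg_mul_sq (k y t : ℝ) :
    exp (-(k * y ^ 2)) ^ 2 = exp (2 * k * t ^ 2) *
      (exp (-(k * (y - t) ^ 2)) * exp (-(k * (y + t) ^ 2))) := by
  rw [← exp_nat_mul, ← exp_add, ← exp_add]
  congr 1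
  push_cast
  ring

/-- The superposition `c ↦ ∑ᵢ wᵢ exp (-k (c - xᵢ)²)` of unnormalized Gaussians of common rate `k`,
with weights `w` and centres `x`; for standard deviation `σ` the rate is `1 / (2 * σ ^ 2)`. -/
noncomputable def gaussianMixture {ι : Type*} (w x : ι → ℝ) (k c : ℝ) : ℝ :=
  ∑' i, w i * exp (-(k * (c - x i) ^ 2))

section GaussianMixture

variable {ι : Type*} {w : ι → ℝ} {k : ℝ}

theorem hasSum_gaussianMixture (hw : Summable w) (hk : 0 ≤ k) (x : ι → ℝ) (c : ℝ) :
    HasSum (fun i ↦ w i * exp (-(k * (c - x i) ^ 2))) (gaussianMixture w x k c) := by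
  refine (Summable.of_norm_bounded hw.norm fun i ↦ ?_).hasSum
  have exp_le_one : exp (-(k * (c - x i) ^ 2)) ≤ 1 :=
    exp_le_one_iff.2 (neg_nonpos.2 (by positivity))
  rw [norm_mul, norm_of_nonneg (exp_nonneg _)]
  exact mul_le_of_le_one_right (norm_nonneg _) exp_le_one

theorem sq_gaussianMixture_le (hw : Summable w) (hw_nonneg : ∀ i, 0 ≤ w i) (hk : 0 ≤ k)
    (x : ι → ℝ) (c t : ℝ) :
    gaussianMixture w x k c ^ 2 ≤ exp (2 * k * t ^ 2) *
      (gaussianMixture w x k (c - t) * gaussianMixture w x k (c + t)) := by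
  have term_nonneg (d : ℝ) (i : ι) : 0 ≤ w i * exp (-(k * (d - x i) ^ 2)) :=
    mul_nonneg (hw_nonneg i) (exp_nonneg _)
  rw [← mul_assoc]
  refine hasSum_sq_le_mul_of_sq_le_mul (hasSum_gaussianMixture hw hk x c)
    ((hasSum_gaussianMixture hw hk x (c - t)).mul_left _) (hasSum_gaussianMixture hw hk x (c + t))
    (fun i ↦ mul_nonneg (exp_nonneg _) (term_nonneg _ i)) (term_nonneg _) fun i ↦ le_of_eq ?_
  rw [mul_pow, sq_exp_neg_mul_sq k (c - x i) t, sub_right_comm c t, add_sub_right_comm c t]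
  ring

end GaussianMixture

theorem pgS_eq_gaussianMixture (σ a b : ℝ) :
    pgS σ a b = gaussianMixture (fun n : ℕ ↦ a ^ n / n.factorial) (↑) (1 / (2 * σ ^ 2)) b := by
  simp only [pgS, gaussianMixture, neg_div, one_div_mul_eq_div]

theorem pgS_logConvex_ineq_general {σ a : ℝ} (hσ : σ ≠ 0) (ha : 0 ≤ a) (c t : ℝ) :
    pgS σ a c ^ 2 ≤ exp (t ^ 2 / σ ^ 2) * (pgS σ a (c - t) * pgS σ a (c + t)) := by
  have rate : t ^ 2 / σ ^ 2 = 2 * (1 / (2 * σ ^ 2)) * t ^ 2 := by field_simp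
  simp only [pgS_eq_gaussianMixture, rate]
  exact sq_gaussianMixture_le (summable_pow_div_factorial a) (fun n ↦ by positivity)
    (by positivity) _ c t

theorem pgS_logConvex_ineq (σ : ℝ) (hσ : 0 < σ) (a : ℝ) (ha : 0 ≤ a) (b : ℝ) :
    pgS σ a (b - 1) ^ 2 ≤ Real.exp (1 / σ ^ 2) * (pgS σ a (b - 2) * pgS σ a b) := by
  simpa only [one_pow, sub_sub, one_add_one_eq_two, sub_add_cancel] using
    pgS_logConvex_ineq_general hσ.ne' ha (b - 1) 1
end

section
/- (Proposition 1) Let p : ℝ → ℝ be a smooth probability density function (p ≥ 0, ∫_ℝ p = 1) that is not almost everywhere zero, let σ > 0, and let C > 0. Let p_σ = p ⋆ N(0, σ²) denote the convolution of p with the Gaussian density x ↦ (1/√(2πσ²)) e^{−x²/(2σ²)}. Then the derivative d/dx [ log p_σ(x) ] is bounded on the interval [−C, C]. -/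
open Real MeasureTheory

/-- The Gaussian-smoothed density `p_σ = p ⋆ N(0, σ²)` on `ℝ`. -/
noncomputable def gaussSmooth (p : ℝ → ℝ) (σ : ℝ) (x : ℝ) : ℝ :=
  ∫ t : ℝ, p t * ((Real.sqrt (2 * π * σ ^ 2))⁻¹ * Real.exp (-(x - t) ^ 2 / (2 * σ ^ 2)))

/-!
The Gaussian density is bounded with continuous bounded derivative, so differentiating under the
integral sign shows that its convolution with an integrable `p` is `C¹`. If moreover `p ≥ 0` is not
a.e. zero, the convolution is positive everywhere; hence its logarithm is `C¹`, and the derivative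
of the logarithm is continuous, so bounded on compact sets.
-/

open ProbabilityTheory Set
open scoped Convolution NNReal

section ConvolutionExists

variable {𝕜 G E E' F : Type*} [NontriviallyNormedField 𝕜]
  [NormedAddCommGroup E] [NormedSpace 𝕜 E] [NormedAddCommGroup E'] [NormedSpace 𝕜 E']
  [NormedAddCommGroup F] [NormedSpace 𝕜 F]
  [AddGroup G] [MeasurableSpace G] [MeasurableAdd G] [MeasurableNeg G]
  {μ : Measure G} {f : G → E} {g : G → E'}

theorem convolutionExists_of_bddAbove_right (L : E →L[𝕜] E' →L[𝕜] F) (hf : Integrable f μ)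
    (hg : StronglyMeasurable g) (hbg : BddAbove (range fun x ↦ ‖g x‖)) :
    ConvolutionExists f g L μ := fun _ ↦
  BddAbove.convolutionExistsAt' L (hbg.mono (image_subset_range _ _)) MeasurableSet.univ
    (subset_univ _) hf.integrableOn hg.aestronglyMeasurable

end ConvolutionExists

section ConvolutionDeriv

variable {𝕜 E E' F : Type*} [RCLike 𝕜]
  [NormedAddCommGroup E] [NormedSpace 𝕜 E] [NormedAddCommGroup E'] [NormedSpace 𝕜 E']
  [NormedAddCommGroup F] [NormedSpace ℝ F] [NormedSpace 𝕜 F]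
  {μ : Measure 𝕜} {f : 𝕜 → E} {g : 𝕜 → E'}

theorem hasDerivAt_convolution_right_of_bddAbove_deriv (L : E →L[𝕜] E' →L[𝕜] F)
    (hf : Integrable f μ) (hg : ContDiff 𝕜 1 g) (hbg' : BddAbove (range fun x ↦ ‖deriv g x‖))
    {x₀ : 𝕜} (hfg : ConvolutionExistsAt f g x₀ L μ) :
    HasDerivAt (f ⋆[L, μ] g) ((f ⋆[L, μ] deriv g) x₀) x₀ := by
  obtain ⟨B, hB⟩ := hbg'
  have hg'_cont : Continuous (deriv g) := hg.continuous_deriv le_rfl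
  have h_bound (t x : 𝕜) : ‖L (f t) (deriv g (x - t))‖ ≤ ‖L‖ * ‖f t‖ * B :=
    L.le_of_opNorm₂_le_of_le le_rfl le_rfl (hB (mem_range_self (x - t)))
  have h_deriv (t x : 𝕜) :
      HasDerivAt (fun y ↦ L (f t) (g (y - t))) (L (f t) (deriv g (x - t))) x :=
    (L (f t)).hasFDerivAt.comp_hasDerivAt x
      ((hg.differentiable one_ne_zero (x - t)).hasDerivAt.comp_sub_const x t)
  exact (hasDerivAt_integral_of_dominated_loc_of_deriv_le
    (F := fun x t ↦ L (f t) (g (x - t))) Filter.univ_mem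
    (.of_forall fun _ ↦ hf.aestronglyMeasurable.convolution_integrand_snd' L
      hg.continuous.aestronglyMeasurable)
    hfg
    (hf.aestronglyMeasurable.convolution_integrand_snd' L hg'_cont.aestronglyMeasurable)
    (.of_forall fun t x _ ↦ h_bound t x) ((hf.norm.const_mul _).mul_const B)
    (.of_forall fun t x _ ↦ h_deriv t x)).2

theorem contDiff_one_convolution_right_of_bddAbove (L : E →L[𝕜] E' →L[𝕜] F)
    (hf : Integrable f μ) (hg : ContDiff 𝕜 1 g) (hbg : BddAbove (range fun x ↦ ‖g x‖))
    (hbg' : BddAbove (range fun x ↦ ‖deriv g x‖)) :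
    ContDiff 𝕜 1 (f ⋆[L, μ] g) := by
  have hfg : ConvolutionExists f g L μ :=
    convolutionExists_of_bddAbove_right L hf hg.continuous.stronglyMeasurable hbg
  have h_deriv (x : 𝕜) := hasDerivAt_convolution_right_of_bddAbove_deriv L hf hg hbg' (hfg x)
  refine contDiff_one_iff_deriv.2 ⟨fun x ↦ (h_deriv x).differentiableAt, ?_⟩
  rw [funext fun x ↦ (h_deriv x).deriv]
  exact hbg'.continuous_convolution_right_of_integrable L hf (hg.continuous_deriv le_rfl)

end ConvolutionDeriv

theorem convolution_mul_pos {G : Type*} [Sub G] [MeasurableSpace G] {μ : Measure G}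
    {f g : G → ℝ} {x : G} (hfg : ConvolutionExistsAt f g x (.mul ℝ ℝ) μ)
    (hf : 0 ≤ᵐ[μ] f) (hf_ne : ¬ f =ᵐ[μ] 0) (hg : ∀ y, 0 < g y) :
    0 < (f ⋆[.mul ℝ ℝ, μ] g) x := by
  have h_nonneg : 0 ≤ᵐ[μ] fun t ↦ f t * g (x - t) :=
    hf.mono fun t ht ↦ mul_nonneg ht (hg _).le
  refine (integral_nonneg_of_ae h_nonneg).lt_of_ne' fun h_zero ↦ hf_ne ?_
  filter_upwards [(integral_eq_zero_iff_of_nonneg_ae h_nonneg hfg).1 h_zero] with t ht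
  exact (mul_eq_zero.1 ht).resolve_right (hg _).ne'

section Gaussian

variable (m : ℝ) (v : ℝ≥0)

theorem contDiff_gaussianPDFReal {n : WithTop ℕ∞} : ContDiff ℝ n (gaussianPDFReal m v) := by
  rw [gaussianPDFReal_def]
  fun_prop

theorem hasDerivAt_gaussianPDFReal (x : ℝ) :
    HasDerivAt (gaussianPDFReal m v) (-((x - m) / v) * gaussianPDFReal m v x) x := by
  have h_exponent : HasDerivAt (fun y ↦ -(y - m) ^ 2 / (2 * v)) (-(2 * (x - m)) / (2 * v)) x := by
    simpa using ((((hasDerivAt_id x).sub_const m).pow 2).neg).div_const (2 * (v : ℝ))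
  rw [gaussianPDFReal_def]
  exact (h_exponent.exp.const_mul _).congr_deriv (by ring)

theorem gaussianPDFReal_le (x : ℝ) : gaussianPDFReal m v x ≤ (√(2 * π * v))⁻¹ := by
  refine mul_le_of_le_one_right (by positivity) (exp_le_one_iff.2 ?_)
  rw [neg_div]
  exact neg_nonpos.2 (by positivity)

theorem bddAbove_range_norm_gaussianPDFReal : BddAbove (range fun x ↦ ‖gaussianPDFReal m v x‖) := by
  refine ⟨(√(2 * π * v))⁻¹, forall_mem_range.2 fun x ↦ ?_⟩
  rw [norm_of_nonneg (gaussianPDFReal_nonneg m v x)]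
  exact gaussianPDFReal_le m v x

theorem abs_mul_exp_neg_sq_div_le {c : ℝ} (hc : 0 < c) (x : ℝ) :
    |x| * exp (-x ^ 2 / (2 * c)) ≤ √(c * exp (-1)) := by
  refine le_sqrt_of_sq_le ?_
  calc (|x| * exp (-x ^ 2 / (2 * c))) ^ 2
      = c * (x ^ 2 / c * exp (-(x ^ 2 / c))) := by
        rw [mul_pow, sq_abs, ← exp_nat_mul]
        push_cast
        field_simp
    _ ≤ c * exp (-1) := by gcongr; exact mul_exp_neg_le_exp_neg_one _

theorem abs_deriv_gaussianPDFReal_le (hv : v ≠ 0) (x : ℝ) :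
    |deriv (gaussianPDFReal m v) x| ≤ (√(2 * π * v))⁻¹ * (√(v * exp (-1)) / v) := by
  rw [(hasDerivAt_gaussianPDFReal m v x).deriv, abs_mul, abs_neg, abs_div, NNReal.abs_eq,
    abs_of_nonneg (gaussianPDFReal_nonneg m v x)]
  calc |x - m| / v * gaussianPDFReal m v x
      = (√(2 * π * v))⁻¹ * (|x - m| * exp (-(x - m) ^ 2 / (2 * v)) / v) := by
        rw [gaussianPDFReal]
        ring
    _ ≤ (√(2 * π * v))⁻¹ * (√(v * exp (-1)) / v) := by
        gcongr
        exact abs_mul_exp_neg_sq_div_le (by positivity) _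

theorem bddAbove_range_norm_deriv_gaussianPDFReal (hv : v ≠ 0) :
    BddAbove (range fun x ↦ ‖deriv (gaussianPDFReal m v) x‖) :=
  ⟨_, forall_mem_range.2 (abs_deriv_gaussianPDFReal_le m v hv)⟩

end Gaussian

section GaussSmooth

variable {p : ℝ → ℝ} {σ : ℝ}

theorem gaussSmooth_eq_convolution (p : ℝ → ℝ) (σ : ℝ) :
    gaussSmooth p σ = p ⋆[.mul ℝ ℝ] gaussianPDFReal 0 (‖σ‖₊ ^ 2) := by
  ext x
  simp [gaussSmooth, convolution_def, gaussianPDFReal]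

theorem contDiff_one_gaussSmooth (hp_int : Integrable p) (hσ : σ ≠ 0) :
    ContDiff ℝ 1 (gaussSmooth p σ) := by
  rw [gaussSmooth_eq_convolution]
  exact contDiff_one_convolution_right_of_bddAbove _ hp_int (contDiff_gaussianPDFReal _ _)
    (bddAbove_range_norm_gaussianPDFReal _ _)
    (bddAbove_range_norm_deriv_gaussianPDFReal _ _ (by simpa using hσ))

theorem gaussSmooth_pos (hp_nonneg : 0 ≤ᵐ[volume] p) (hp_int : Integrable p)
    (hp_ne : ¬ p =ᵐ[volume] 0) (hσ : σ ≠ 0) (x : ℝ) : 0 < gaussSmooth p σ x := by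
  rw [gaussSmooth_eq_convolution]
  have h_exists : ConvolutionExists p (gaussianPDFReal 0 (‖σ‖₊ ^ 2)) (.mul ℝ ℝ) volume :=
    convolutionExists_of_bddAbove_right _ hp_int (stronglyMeasurable_gaussianPDFReal _ _)
      (bddAbove_range_norm_gaussianPDFReal _ _)
  exact convolution_mul_pos (h_exists x) hp_nonneg hp_ne
    fun y ↦ gaussianPDFReal_pos _ _ y (by simpa using hσ)

theorem score_bounded_on_interval_general (hp_nonneg : 0 ≤ᵐ[volume] p) (hp_int : Integrable p)
    (hp_ne : ¬ p =ᵐ[volume] 0) (hσ : σ ≠ 0) {s : Set ℝ} (hs : IsCompact s) :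
    ∃ K : ℝ, ∀ x ∈ s, |deriv (fun x ↦ log (gaussSmooth p σ x)) x| ≤ K := by
  have h_log : ContDiff ℝ 1 fun x ↦ log (gaussSmooth p σ x) :=
    (contDiff_one_gaussSmooth hp_int hσ).log fun x ↦
      (gaussSmooth_pos hp_nonneg hp_int hp_ne hσ x).ne'
  exact hs.exists_bound_of_continuousOn (h_log.continuous_deriv le_rfl).continuousOn

end GaussSmooth

/-- Proposition 1: for a smooth probability density `p` that is not a.e. zero,
the derivative of `log (p ⋆ N(0, σ²))` is bounded on `[−C, C]`. -/
theorem score_bounded_on_interval (p : ℝ → ℝ) (hp_smooth : ContDiff ℝ (⊤ : ℕ∞) p)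
    (hp_nonneg : ∀ x, 0 ≤ p x) (hp_int : Integrable p)
    (hp_one : ∫ x, p x = 1)
    (hp_ne : ¬ (∀ᵐ x : ℝ, p x = 0))
    (σ : ℝ) (hσ : 0 < σ) (C : ℝ) (hC : 0 < C) :
    ∃ K : ℝ, ∀ x ∈ Set.Icc (-C) C,
      |deriv (fun x => Real.log (gaussSmooth p σ x)) x| ≤ K :=
  score_bounded_on_interval_general (.of_forall hp_nonneg) hp_int hp_ne hσ.ne' isCompact_Icc
end
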